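/- Let G be a connected bipartite finite simple graph on vertex set V = {v_1,...,v_n} with bipartition (V_1, V_2), and let A be an independent set of vertices such that A ∩ V_1 ≠ ∅ and A ∩ V_2 ≠ ∅ and such that H_A ∩ R+A is a facet of the edge cone. Then, setting A_1 = A ∩ V_1 and A_2 = A ∩ V_2, both H_{A_1} ∩ R+A and H_{A_2} ∩ R+A are facets of the edge cone, and H_{A_1}^- ∩ H_{A_2}^- ⊆ H_A^-; consequently the halfspace H_A^- is redundant in the halfspace representation of the edge cone. -/

import Mathlib

open Finset

/-- The edge vector `e_i + e_j` associated to an edge `{i, j}`. -/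
def edgeVector {V : Type*} [DecidableEq V] (i j : V) : V → ℝ :=
  fun k => (if k = i then 1 else 0) + (if k = j then 1 else 0)

/-- The edge cone of a graph `G`: all nonnegative real linear combinations of the
edge vectors of `G`. -/
def edgeCone {V : Type*} [Fintype V] [DecidableEq V] (G : SimpleGraph V) :
    Set (V → ℝ) :=
  { x | ∃ c : V → V → ℝ, (∀ i j, 0 ≤ c i j) ∧ (∀ i j, ¬ G.Adj i j → c i j = 0) ∧
        x = ∑ i, ∑ j, c i j • edgeVector i j }

/-- The neighbor set `N(A)`: vertices adjacent to at least one vertex of `A`. -/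
def nbr {V : Type*} [Fintype V] [DecidableEq V] (G : SimpleGraph V)
    [DecidableRel G.Adj] (A : Finset V) : Finset V :=
  Finset.univ.filter fun v => ∃ a ∈ A, G.Adj v a

/-- `A` is an independent set of vertices of `G`. -/
def IsIndep {V : Type*} (G : SimpleGraph V) (A : Finset V) : Prop :=
  ∀ a ∈ A, ∀ b ∈ A, ¬ G.Adj a b

/-- `F` is a face of the cone `Q`: `F = Q ∩ {x | ⟪x, a⟫ = 0}` for some `a` with
`Q ⊆ {x | ⟪x, a⟫ ≤ 0}`. -/
def IsFace {V : Type*} [Fintype V] (Q F : Set (V → ℝ)) : Prop :=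
  ∃ a : V → ℝ, (∀ x ∈ Q, ∑ i, x i * a i ≤ 0) ∧ F = Q ∩ {x | ∑ i, x i * a i = 0}

/-- `F` is a facet of the cone `Q`: a face whose linear span has dimension one less
than the dimension of the linear span of `Q`. -/
def IsFacet {V : Type*} [Fintype V] (Q F : Set (V → ℝ)) : Prop :=
  IsFace Q F ∧
    Module.finrank ℝ (Submodule.span ℝ F) = Module.finrank ℝ (Submodule.span ℝ Q) - 1

/-!
Every edge vector, hence every point of the edge cone, satisfies `∑_{N(B)} x - ∑_B x ≥ 0`, for any
vertex set `B`. If `B` and `C` are disjoint and have disjoint neighbor sets, these excesses add up,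
so a point of the cone lies on `H_{B ∪ C}` only if it lies on both `H_B` and `H_C`. The faces cut
out by `H_B` and `H_C` thus contain the facet cut out by `H_{B ∪ C}`, and a face containing a facet
is a facet or the whole cone. The latter is excluded because `C` lies outside `B ∪ N(B)`, so that by
connectedness some edge leaves `B ∪ N(B)`, and its edge vector is off `H_B`. For `B = A ∩ V₁` and
`C = A ∩ V₂` the neighbor sets are disjoint because they lie in opposite classes.
-/

section Cone

variable {V : Type*} [Fintype V] {Q F F' : Set (V → ℝ)}

lemma isFace_inter_ker_of_nonneg (φ : (V → ℝ) →ₗ[ℝ] ℝ) (hφ : ∀ x ∈ Q, 0 ≤ φ x) :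
    IsFace Q (Q ∩ {x | φ x = 0}) := by
  classical
  have hsum (x : V → ℝ) : ∑ i, x i * -φ (fun j => if i = j then 1 else 0) = -φ x := by
    simp only [φ.pi_apply_eq_sum_univ x, mul_neg, sum_neg_distrib, smul_eq_mul]
  refine ⟨fun i => -φ (fun j => if i = j then 1 else 0), fun x hx => ?_, ?_⟩
  · rw [hsum]
    exact neg_nonpos.2 (hφ x hx)
  · simp only [hsum, neg_eq_zero]

lemma IsFace.subset (hF : IsFace Q F) : F ⊆ Q := by
  obtain ⟨a, -, rfl⟩ := hF
  exact Set.inter_subset_left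

lemma IsFace.eq_of_subset_span (hF : IsFace Q F) (hQ : Q ⊆ Submodule.span ℝ F) : F = Q := by
  obtain ⟨a, -, rfl⟩ := hF
  refine Set.inter_eq_left.2 fun x hx => ?_
  have hspan : Submodule.span ℝ (Q ∩ {x | ∑ i, x i * a i = 0}) ≤
      LinearMap.ker (Fintype.linearCombination ℝ a) :=
    Submodule.span_le.2 fun y hy => hy.2
  exact hspan (hQ hx)

lemma IsFace.span_lt_span (hF : IsFace Q F) (hne : F ≠ Q) :
    Submodule.span ℝ F < Submodule.span ℝ Q :=
  (Submodule.span_mono hF.subset).lt_of_not_ge fun hle =>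
    hne (hF.eq_of_subset_span (Submodule.subset_span.trans hle))

lemma IsFacet.of_subset (hF : IsFacet Q F) (hF' : IsFace Q F') (hsub : F ⊆ F') (hne : F' ≠ Q) :
    IsFacet Q F' := by
  have hle := Submodule.finrank_mono (Submodule.span_mono (R := ℝ) hsub)
  have hlt := Submodule.finrank_lt_finrank_of_lt (hF'.span_lt_span hne)
  have heq := hF.2
  exact ⟨hF', by lia⟩

end Cone

section EdgeCone

variable {V : Type*} [Fintype V] [DecidableEq V] {G : SimpleGraph V}

lemma edgeVector_mem_edgeCone {u v : V} (h : G.Adj u v) : edgeVector u v ∈ edgeCone G := by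
  refine ⟨fun i j => if i = u ∧ j = v then 1 else 0, fun i j => ?_, fun i j hij => ?_, ?_⟩
  · positivity
  · exact if_neg fun ⟨hi, hj⟩ => hij (hi ▸ hj ▸ h)
  · simp [ite_and]

lemma map_nonneg_of_mem_edgeCone {φ : (V → ℝ) →ₗ[ℝ] ℝ}
    (hφ : ∀ i j, G.Adj i j → 0 ≤ φ (edgeVector i j)) {x : V → ℝ} (hx : x ∈ edgeCone G) :
    0 ≤ φ x := by
  obtain ⟨c, hc, hc_adj, rfl⟩ := hx
  simp only [map_sum, map_smul]
  refine sum_nonneg fun i _ => sum_nonneg fun j _ => ?_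
  by_cases hij : G.Adj i j
  · exact smul_nonneg (hc i j) (hφ i j hij)
  · simp [hc_adj i j hij]

end EdgeCone

section Neighbors

variable {V : Type*} [Fintype V] [DecidableEq V] {G : SimpleGraph V} [DecidableRel G.Adj]
  {A B C S T : Finset V}

lemma mem_nbr {v : V} : v ∈ nbr G B ↔ ∃ a ∈ B, G.Adj v a := by
  simp [nbr]

lemma mem_nbr_of_adj {u v : V} (h : G.Adj u v) (hu : u ∈ B) : v ∈ nbr G B :=
  mem_nbr.2 ⟨u, hu, h.symm⟩

lemma nbr_union : nbr G (B ∪ C) = nbr G B ∪ nbr G C := by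
  ext v
  simp only [mem_nbr, mem_union, or_and_right, exists_or]

lemma disjoint_nbr_comm : Disjoint B (nbr G C) ↔ Disjoint C (nbr G B) := by
  simp only [disjoint_left, mem_nbr, not_exists, not_and]
  exact ⟨fun h c hc b hb hcb => h hb c hc hcb.symm, fun h b hb c hc hbc => h hc b hb hbc.symm⟩

lemma IsIndep.disjoint_nbr (hA : IsIndep G A) (hB : B ⊆ A) (hC : C ⊆ A) :
    Disjoint B (nbr G C) := by
  refine disjoint_left.2 fun b hb hbC => ?_
  obtain ⟨c, hc, hbc⟩ := mem_nbr.1 hbC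
  exact hA b (hB hb) c (hC hc) hbc

lemma nbr_subset_of_isBipartiteWith (hG : G.IsBipartiteWith S T) (hB : B ⊆ S) :
    nbr G B ⊆ T := by
  intro v hv
  obtain ⟨b, hb, hvb⟩ := mem_nbr.1 hv
  exact hG.mem_of_mem_adj (hB hb) hvb.symm

lemma disjoint_nbr_nbr_of_isBipartiteWith (hG : G.IsBipartiteWith S T) (hB : B ⊆ S)
    (hC : C ⊆ T) : Disjoint (nbr G B) (nbr G C) :=
  (disjoint_coe.1 hG.disjoint).symm.mono (nbr_subset_of_isBipartiteWith hG hB)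
    (nbr_subset_of_isBipartiteWith hG.symm hC)

end Neighbors

section NbrExcess

variable {V : Type*} [Fintype V] [DecidableEq V] (G : SimpleGraph V) [DecidableRel G.Adj]
  (B : Finset V)

/-- The linear functional `x ↦ ∑_{N(B)} x - ∑_B x`, whose kernel is the hyperplane `H_B` and which
is nonnegative exactly on the halfspace `H_B⁻`. -/
def nbrExcess : (V → ℝ) →ₗ[ℝ] ℝ :=
  ∑ i ∈ nbr G B, LinearMap.proj i - ∑ i ∈ B, LinearMap.proj i

/-- The intersection of the hyperplane `H_B` with the edge cone of `G`, for an arbitrary vertex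
set `B`. -/
def nbrFace : Set (V → ℝ) :=
  {x | ∑ i ∈ B, x i = ∑ i ∈ nbr G B, x i} ∩ edgeCone G

variable {G B} {C : Finset V}

lemma nbrExcess_apply (x : V → ℝ) :
    nbrExcess G B x = ∑ i ∈ nbr G B, x i - ∑ i ∈ B, x i := by
  simp [nbrExcess]

lemma nbrExcess_nonneg_iff {x : V → ℝ} :
    0 ≤ nbrExcess G B x ↔ ∑ i ∈ B, x i ≤ ∑ i ∈ nbr G B, x i := by
  rw [nbrExcess_apply, sub_nonneg]

lemma nbrExcess_edgeVector (u v : V) :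
    nbrExcess G B (edgeVector u v) =
      ((if u ∈ nbr G B then 1 else 0) - if v ∈ B then 1 else 0) +
        ((if v ∈ nbr G B then 1 else 0) - if u ∈ B then 1 else 0) := by
  simp only [nbrExcess_apply, edgeVector, sum_add_distrib, sum_ite_eq']
  ring

lemma nbrExcess_nonneg {x : V → ℝ} (hx : x ∈ edgeCone G) : 0 ≤ nbrExcess G B x := by
  refine map_nonneg_of_mem_edgeCone (fun u v huv => ?_) hx
  have hle {u v : V} (h : G.Adj u v) :
      (if u ∈ B then 1 else 0 : ℝ) ≤ if v ∈ nbr G B then 1 else 0 := by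
    have := mem_nbr_of_adj (B := B) h
    split_ifs <;> simp_all
  rw [nbrExcess_edgeVector]
  exact add_nonneg (sub_nonneg.2 (hle huv.symm)) (sub_nonneg.2 (hle huv))

lemma nbrExcess_union (hBC : Disjoint B C) (hN : Disjoint (nbr G B) (nbr G C)) (x : V → ℝ) :
    nbrExcess G (B ∪ C) x = nbrExcess G B x + nbrExcess G C x := by
  simp only [nbrExcess_apply, nbr_union, sum_union hBC, sum_union hN]
  ring

lemma mem_nbrFace {x : V → ℝ} : x ∈ nbrFace G B ↔ x ∈ edgeCone G ∧ nbrExcess G B x = 0 := by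
  rw [nbrExcess_apply, sub_eq_zero, eq_comm, and_comm]
  rfl

lemma isFace_nbrFace : IsFace (edgeCone G) (nbrFace G B) := by
  have h : nbrFace G B = edgeCone G ∩ {x | nbrExcess G B x = 0} := Set.ext fun _ => mem_nbrFace
  rw [h]
  exact isFace_inter_ker_of_nonneg _ fun x => nbrExcess_nonneg

lemma nbrFace_union (hBC : Disjoint B C) (hN : Disjoint (nbr G B) (nbr G C)) :
    nbrFace G (B ∪ C) = nbrFace G B ∩ nbrFace G C := by
  ext x
  simp only [Set.mem_inter_iff, mem_nbrFace, nbrExcess_union hBC hN, ← and_and_left]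
  exact and_congr_right fun hx =>
    add_eq_zero_iff_of_nonneg (nbrExcess_nonneg hx) (nbrExcess_nonneg hx)

lemma exists_adj_nbrExcess_pos (hG : G.Preconnected) (hB : B.Nonempty) {w : V}
    (hw : w ∉ B ∪ nbr G B) : ∃ u v, G.Adj u v ∧ 0 < nbrExcess G B (edgeVector u v) := by
  obtain ⟨b, hb⟩ := hB
  obtain ⟨p⟩ := hG b w
  obtain ⟨⟨⟨u, v⟩, huv⟩, -, hu, hv⟩ :=
    p.exists_boundary_dart ↑(B ∪ nbr G B) (mem_union_left _ hb) hw
  obtain ⟨hvB, hvN⟩ : v ∉ B ∧ v ∉ nbr G B := by simpa using hv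
  have huB : u ∉ B := fun h => hvN (mem_nbr_of_adj huv h)
  have huN : u ∈ nbr G B := (mem_union.1 hu).resolve_left huB
  refine ⟨u, v, huv, ?_⟩
  simp [nbrExcess_edgeVector, huB, huN, hvB, hvN]

lemma nbrFace_ne_edgeCone (hG : G.Preconnected) (hB : B.Nonempty) {w : V}
    (hw : w ∉ B ∪ nbr G B) : nbrFace G B ≠ edgeCone G := by
  intro heq
  obtain ⟨u, v, huv, hpos⟩ := exists_adj_nbrExcess_pos hG hB hw
  have hmem : edgeVector u v ∈ nbrFace G B := heq ▸ edgeVector_mem_edgeCone huv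
  exact hpos.ne' (mem_nbrFace.1 hmem).2

lemma IsFacet.nbrFace_left (hfacet : IsFacet (edgeCone G) (nbrFace G (B ∪ C)))
    (hG : G.Preconnected) (hB : B.Nonempty) (hC : C.Nonempty) (hBC : Disjoint B C)
    (hN : Disjoint (nbr G B) (nbr G C)) (hCB : Disjoint C (nbr G B)) :
    IsFacet (edgeCone G) (nbrFace G B) := by
  obtain ⟨c, hc⟩ := hC
  have hc_notMem : c ∉ B ∪ nbr G B :=
    disjoint_left.1 (disjoint_union_right.2 ⟨hBC.symm, hCB⟩) hc
  refine hfacet.of_subset isFace_nbrFace ?_ (nbrFace_ne_edgeCone hG hB hc_notMem)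
  rw [nbrFace_union hBC hN]
  exact Set.inter_subset_left

lemma halfspace_inter_subset_halfspace_union (hBC : Disjoint B C)
    (hN : Disjoint (nbr G B) (nbr G C)) :
    {x : V → ℝ | ∑ i ∈ B, x i ≤ ∑ i ∈ nbr G B, x i} ∩
        {x : V → ℝ | ∑ i ∈ C, x i ≤ ∑ i ∈ nbr G C, x i} ⊆
      {x : V → ℝ | ∑ i ∈ B ∪ C, x i ≤ ∑ i ∈ nbr G (B ∪ C), x i} := by
  rintro x ⟨hxB, hxC⟩
  refine nbrExcess_nonneg_iff.1 ?_
  rw [nbrExcess_union hBC hN]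
  exact add_nonneg (nbrExcess_nonneg_iff.2 hxB) (nbrExcess_nonneg_iff.2 hxC)

end NbrExcess

theorem stmt8_general {V : Type*} [Fintype V] [DecidableEq V] (G : SimpleGraph V)
    [DecidableRel G.Adj] (hG : G.Preconnected) (A B C : Finset V) (hA : B ∪ C = A)
    (hB : B.Nonempty) (hC : C.Nonempty) (hBC : Disjoint B C)
    (hN : Disjoint (nbr G B) (nbr G C)) (hCB : Disjoint C (nbr G B))
    (hfacet : IsFacet (edgeCone G)
      ({x : V → ℝ | ∑ i ∈ A, x i = ∑ i ∈ nbr G A, x i} ∩ edgeCone G)) :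
    IsFacet (edgeCone G)
      ({x : V → ℝ | ∑ i ∈ B, x i = ∑ i ∈ nbr G B, x i} ∩ edgeCone G) ∧
    IsFacet (edgeCone G)
      ({x : V → ℝ | ∑ i ∈ C, x i = ∑ i ∈ nbr G C, x i} ∩ edgeCone G) ∧
    {x : V → ℝ | ∑ i ∈ B, x i ≤ ∑ i ∈ nbr G B, x i} ∩
        {x : V → ℝ | ∑ i ∈ C, x i ≤ ∑ i ∈ nbr G C, x i} ⊆
      {x : V → ℝ | ∑ i ∈ A, x i ≤ ∑ i ∈ nbr G A, x i} := by
  subst hA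
  have hfacet' : IsFacet (edgeCone G) (nbrFace G (C ∪ B)) := union_comm B C ▸ hfacet
  exact ⟨IsFacet.nbrFace_left hfacet hG hB hC hBC hN hCB,
    hfacet'.nbrFace_left hG hC hB hBC.symm hN.symm (disjoint_nbr_comm.1 hCB),
    halfspace_inter_subset_halfspace_union hBC hN⟩

/-- For a connected bipartite graph `G` with bipartition `(V₁, V₂)` and an independent
set `A` meeting both `V₁` and `V₂` such that `H_A ∩ ℝ₊𝒜` is a facet, setting
`A₁ = A ∩ V₁` and `A₂ = A ∩ V₂`, both `H_{A₁} ∩ ℝ₊𝒜` and `H_{A₂} ∩ ℝ₊𝒜` are facets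
and `H_{A₁}⁻ ∩ H_{A₂}⁻ ⊆ H_A⁻`, so the halfspace `H_A⁻` is redundant. -/
theorem stmt8 {n : ℕ} (G : SimpleGraph (Fin n)) [DecidableRel G.Adj]
    (hG : G.Connected)
    (V₁ V₂ : Finset (Fin n)) (hdisj : Disjoint V₁ V₂)
    (hunion : V₁ ∪ V₂ = Finset.univ)
    (hbip : ∀ i j, G.Adj i j → (i ∈ V₁ ∧ j ∈ V₂) ∨ (i ∈ V₂ ∧ j ∈ V₁))
    (A : Finset (Fin n)) (hA : IsIndep G A)
    (h1 : (A ∩ V₁).Nonempty) (h2 : (A ∩ V₂).Nonempty)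
    (hfacet : IsFacet (edgeCone G)
      ({x : Fin n → ℝ | ∑ i ∈ A, x i = ∑ i ∈ nbr G A, x i} ∩ edgeCone G)) :
    IsFacet (edgeCone G)
      ({x : Fin n → ℝ | ∑ i ∈ A ∩ V₁, x i = ∑ i ∈ nbr G (A ∩ V₁), x i} ∩ edgeCone G) ∧
    IsFacet (edgeCone G)
      ({x : Fin n → ℝ | ∑ i ∈ A ∩ V₂, x i = ∑ i ∈ nbr G (A ∩ V₂), x i} ∩ edgeCone G) ∧
    {x : Fin n → ℝ | ∑ i ∈ A ∩ V₁, x i ≤ ∑ i ∈ nbr G (A ∩ V₁), x i} ∩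
        {x : Fin n → ℝ | ∑ i ∈ A ∩ V₂, x i ≤ ∑ i ∈ nbr G (A ∩ V₂), x i} ⊆
      {x : Fin n → ℝ | ∑ i ∈ A, x i ≤ ∑ i ∈ nbr G A, x i} := by
  have hA_split : A ∩ V₁ ∪ A ∩ V₂ = A := by rw [← inter_union_distrib_left, hunion, inter_univ]
  have hV : G.IsBipartiteWith V₁ V₂ := ⟨disjoint_coe.2 hdisj, hbip⟩
  exact stmt8_general G hG.preconnected A _ _ hA_split h1 h2
    (hdisj.mono inter_subset_right inter_subset_right)
    (disjoint_nbr_nbr_of_isBipartiteWith hV inter_subset_right inter_subset_right)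
    (hA.disjoint_nbr inter_subset_left inter_subset_left) hfacet
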